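/- arXiv:2010.08994 — 2 statements merged into one kernel-verified Lean document; each statement's English description precedes it below -/
import Mathlib

section
/- Let f : {0,1}^n → {0,1} be a boolean function, and let M be the 2^n × 2^n real matrix indexed by pairs x, y ∈ {0,1}^n with entries M_{x,y} = f(x ∧ y), where x ∧ y denotes bitwise AND. Then the rank of M over ℝ equals the sparsity of f: rank(M) = spar(f). -/
/-- The coefficient of the monomial `s` in the unique multilinear polynomial computing
`f : {0,1}^n → ℝ`, given by Möbius inversion. -/
noncomputable def coeff {n : ℕ} (f : Finset (Fin n) → ℝ) (s : Finset (Fin n)) : ℝ :=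
  ∑ t ∈ s.powerset, (-1 : ℝ) ^ (s.card - t.card) * f t

/-- The sparsity of `f`: the number of nonzero coefficients. -/
noncomputable def sparsity {n : ℕ} (f : Finset (Fin n) → ℝ) : ℕ :=
  {s : Finset (Fin n) | coeff f s ≠ 0}.ncard

/-!
A monomial `s` takes the value `1` at `x ∩ y` exactly when `s ⊆ x` and `s ⊆ y`. Expanding `f` into
monomials therefore factors the matrix `f (x ∩ y)` as `Zᵀ * D * Z`, where `Z` is the zeta matrix of
the subset order and `D` is the diagonal matrix of the coefficients of `f`. The Möbius matrix
inverts `Z`, so the rank is that of `D`. The factorization works in any finite meet-semilattice.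
-/

section MoebiusInversion

variable {α R : Type*} [Ring R]

theorem sum_powerset_neg_one_pow_card_eq_ite [DecidableEq α] (s : Finset α) :
    ∑ t ∈ s.powerset, (-1 : R) ^ t.card = if s = ∅ then 1 else 0 := by
  exact_mod_cast congrArg (Int.cast : ℤ → R) (Finset.sum_powerset_neg_one_pow_card (x := s))

theorem sum_Icc_neg_one_pow_card_sub_card [DecidableEq α] (t x : Finset α) :
    ∑ s ∈ Finset.Icc t x, (-1 : R) ^ (s.card - t.card) = if t = x then 1 else 0 := by
  by_cases htx : t ⊆ x
  · have sdiff_eq_empty_iff : x \ t = ∅ ↔ t = x :=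
      Finset.sdiff_eq_empty_iff_subset.trans ⟨htx.antisymm, fun h => h.ge⟩
    calc ∑ s ∈ Finset.Icc t x, (-1 : R) ^ (s.card - t.card)
        = ∑ u ∈ (x \ t).powerset, (-1 : R) ^ u.card := by
          refine Finset.sum_nbij' (· \ t) (t ∪ ·) ?_ ?_ ?_ ?_ ?_
          all_goals simp only [Finset.mem_Icc, Finset.mem_powerset]
          · exact fun s hs => Finset.sdiff_subset_sdiff hs.2 subset_rfl
          · exact fun u hu => ⟨Finset.subset_union_left,
              Finset.union_subset htx (hu.trans Finset.sdiff_subset)⟩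
          · exact fun s hs => Finset.union_sdiff_of_subset hs.1
          · exact fun u hu => Finset.union_sdiff_cancel_left
              (Finset.disjoint_sdiff.mono_right hu)
          · exact fun s hs => by rw [Finset.card_sdiff_of_subset hs.1]
      _ = if t = x then 1 else 0 := by
          simp only [sum_powerset_neg_one_pow_card_eq_ite, sdiff_eq_empty_iff]
  · rw [Finset.Icc_eq_empty htx, Finset.sum_empty, if_neg fun h => htx h.le]

theorem sum_powerset_sum_powerset_neg_one_pow_mul (f : Finset α → R) (x : Finset α) :
    ∑ s ∈ x.powerset, ∑ t ∈ s.powerset, (-1 : R) ^ (s.card - t.card) * f t = f x := by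
  classical
  calc ∑ s ∈ x.powerset, ∑ t ∈ s.powerset, (-1 : R) ^ (s.card - t.card) * f t
      = ∑ t ∈ x.powerset, ∑ s ∈ Finset.Icc t x, (-1 : R) ^ (s.card - t.card) * f t := by
        refine Finset.sum_comm' fun s t => ?_
        simp only [Finset.mem_powerset, Finset.mem_Icc]
        exact ⟨fun ⟨hsx, hts⟩ => ⟨⟨hts, hsx⟩, hts.trans hsx⟩, fun ⟨⟨hts, hsx⟩, _⟩ => ⟨hsx, hts⟩⟩
    _ = f x := by
        simp [← Finset.sum_mul, sum_Icc_neg_one_pow_card_sub_card]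

end MoebiusInversion

theorem sum_powerset_coeff {n : ℕ} (f : Finset (Fin n) → ℝ) (x : Finset (Fin n)) :
    ∑ s ∈ x.powerset, coeff f s = f x :=
  sum_powerset_sum_powerset_neg_one_pow_mul f x

section MeetMatrix

open Matrix IncidenceAlgebra

variable {P : Type*} [Fintype P]

theorem of_incidenceAlgebra_mul_of {R : Type*} [NonUnitalNonAssocSemiring R] [Preorder P]
    [LocallyFiniteOrder P] (a b : IncidenceAlgebra R P) :
    of a * of b = of (a * b) := by
  ext x y
  rw [Matrix.mul_apply, of_apply, IncidenceAlgebra.mul_apply]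
  refine (Finset.sum_subset (Finset.subset_univ (Finset.Icc x y)) fun s _ hs => ?_).symm
  by_cases hxs : x ≤ s
  · have hsy : ¬s ≤ y := fun hsy => hs (Finset.mem_Icc.2 ⟨hxs, hsy⟩)
    rw [of_apply, of_apply, b.apply_eq_zero_of_not_le hsy, mul_zero]
  · rw [of_apply, of_apply, a.apply_eq_zero_of_not_le hxs, zero_mul]

theorem isUnit_det_of_zeta (R : Type*) [CommRing R] [PartialOrder P] [DecidableEq P]
    [DecidableLE P] : IsUnit (of (zeta R : IncidenceAlgebra R P)).det := by
  classical
  let : LocallyFiniteOrder P := Fintype.toLocallyFiniteOrder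
  have mu_mul_zeta_eq_one : of (mu R : IncidenceAlgebra R P) * of (zeta R) = 1 := by
    rw [of_incidenceAlgebra_mul_of, mu_mul_zeta]
    ext x y
    rw [of_apply, IncidenceAlgebra.one_apply, Matrix.one_apply]
  exact isUnit_det_of_left_inverse mu_mul_zeta_eq_one

variable [SemilatticeInf P] [DecidableLE P]

theorem of_inf_eq_zeta_transpose_mul_diagonal_mul_zeta {R : Type*} [NonAssocSemiring R]
    [DecidableEq P] {f g : P → R} (hfg : ∀ x, f x = ∑ s with s ≤ x, g s) :
    of (fun x y => f (x ⊓ y)) =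
      (of (zeta R : IncidenceAlgebra R P))ᵀ * diagonal g * of (zeta R) := by
  ext x y
  rw [of_apply, hfg, Finset.sum_filter, Matrix.mul_apply]
  refine Finset.sum_congr rfl fun s _ => ?_
  rw [mul_diagonal, transpose_apply, of_apply, of_apply, zeta_apply, zeta_apply]
  by_cases hsx : s ≤ x <;> by_cases hsy : s ≤ y <;> simp [hsx, hsy]

theorem rank_of_inf {K : Type*} [Field K] {f g : P → K} (hfg : ∀ x, f x = ∑ s with s ≤ x, g s) :
    (of fun x y => f (x ⊓ y)).rank = {s | g s ≠ 0}.ncard := by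
  classical
  have hZ := isUnit_det_of_zeta (P := P) K
  rw [of_inf_eq_zeta_transpose_mul_diagonal_mul_zeta hfg, rank_mul_eq_left_of_isUnit_det _ _ hZ,
    rank_mul_eq_right_of_isUnit_det _ _ (isUnit_det_transpose _ hZ), rank_diagonal,
    Fintype.card_eq_nat_card]
  exact Nat.card_coe_set_eq {s | g s ≠ 0}

end MeetMatrix

theorem stmt10_general (n : ℕ) (f : Finset (Fin n) → ℝ) :
    (Matrix.of fun x y : Finset (Fin n) => f (x ∩ y)).rank = sparsity f :=
  rank_of_inf fun x => by
    simp only [Finset.filter_subset_univ, sum_powerset_coeff]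

/-- The real rank of the communication matrix of the AND-function
`f∧(x,y) = f(x ∧ y)` equals the sparsity of `f`. -/
theorem stmt10 (n : ℕ) (f : Finset (Fin n) → ℝ) (hf : ∀ x, f x = 0 ∨ f x = 1) :
    (Matrix.of fun x y : Finset (Fin n) => f (x ∩ y)).rank = sparsity f :=
  stmt10_general n f
end

section
/- Let f : {0,1}^n → ℝ, let k ≥ 1, and let D be a probability distribution on [n] such that Σ_{i ∈ w} D(i) ≥ 1/k for every w ∈ W(f, 0^n) = {w ⊆ [n] : f(w) ≠ f(0^n)}. Then: (1) Σ_{i ∈ w} D(i) ≥ 1/k for every w ∈ mon(f); and (2) if mon(f) is nonempty, there exists an index i ∈ [n] that belongs to at least |mon(f)|/k of the sets in mon(f). -/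
/-- The set system of non-constant monomials of `f`. -/
def mon {n : ℕ} (f : Finset (Fin n) → ℝ) : Set (Finset (Fin n)) :=
  {s | coeff f s ≠ 0 ∧ s ≠ ∅}

/-- `W f z`: the family of sets `w ⊆ [n] ∖ z` such that `f (z ∨ w) ≠ f z`. -/
def W {n : ℕ} (f : Finset (Fin n) → ℝ) (z : Finset (Fin n)) : Set (Finset (Fin n)) :=
  {w | w ⊆ zᶜ ∧ f (z ∪ w) ≠ f z}

/-!
The coefficient of a nonempty monomial `s` is an alternating sum of the values of `f` on the subsets
of `s`, so it vanishes when `f` is constant there. Hence every non-constant monomial contains some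
`w ∈ W(f, 0^n)` and inherits its weight. An index drawn from `D` therefore belongs to at least
`|mon(f)|/k` monomials in expectation, so some index does.
-/

theorem sum_powerset_neg_one_pow_card_sub_card {α R : Type*} [CommRing R] {s : Finset α}
    (hs : s.Nonempty) : ∑ t ∈ s.powerset, (-1 : R) ^ (s.card - t.card) = 0 := by
  have binomial := Finset.sum_pow_mul_eq_add_pow (1 : R) (-1) s
  simpa [hs.ne_empty] using binomial

section Monomials

variable {n : ℕ} {f : Finset (Fin n) → ℝ} {s : Finset (Fin n)}

theorem coeff_eq_zero_of_forall_subset_eq {c : ℝ} (hs : s.Nonempty) (hf : ∀ t ⊆ s, f t = c) :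
    coeff f s = 0 :=
  calc
    coeff f s = ∑ t ∈ s.powerset, (-1 : ℝ) ^ (s.card - t.card) * c :=
      Finset.sum_congr rfl fun t ht ↦ by rw [hf t (Finset.mem_powerset.mp ht)]
    _ = 0 := by rw [← Finset.sum_mul, sum_powerset_neg_one_pow_card_sub_card hs, zero_mul]

theorem mem_W_empty {w : Finset (Fin n)} : w ∈ W f ∅ ↔ f w ≠ f ∅ := by
  simp [W]

theorem exists_mem_W_empty_subset_of_mem_mon (hs : s ∈ mon f) : ∃ w ∈ W f ∅, w ⊆ s := by
  obtain ⟨hcoeff, hne⟩ := hs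
  contrapose! hcoeff with hW
  refine coeff_eq_zero_of_forall_subset_eq (c := f ∅) (Finset.nonempty_iff_ne_empty.mpr hne) ?_
  intro t hts
  by_contra hft
  exact hW t (mem_W_empty.mpr hft) hts

end Monomials

section Averaging

variable {ι R : Type*} [Fintype ι] [CommSemiring R]

theorem sum_sum_mem_eq_sum_mul_card_filter_mem [DecidableEq ι] (F : Finset (Finset ι))
    (D : ι → R) :
    ∑ s ∈ F, ∑ i ∈ s, D i = ∑ i, D i * ((F.filter (i ∈ ·)).card : R) :=
  calc
    ∑ s ∈ F, ∑ i ∈ s, D i = ∑ i, ∑ s ∈ F with i ∈ s, D i :=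
      Finset.sum_comm' fun s i ↦ by simp
    _ = ∑ i, D i * ((F.filter (i ∈ ·)).card : R) := by
      simp only [Finset.sum_const, nsmul_eq_mul, mul_comm]

variable [LinearOrder R] [IsStrictOrderedRing R] {D : ι → R}

theorem exists_sum_mul_le_of_sum_eq_one (hD0 : ∀ i, 0 ≤ D i) (hD1 : ∑ i, D i = 1) (a : ι → R) :
    ∃ i, ∑ j, D j * a j ≤ a i := by
  have hι : (Finset.univ : Finset ι).Nonempty :=
    Finset.nonempty_of_sum_ne_zero (hD1.trans_ne one_ne_zero)
  obtain ⟨i, -, hmax⟩ := Finset.exists_max_image Finset.univ a hι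
  refine ⟨i, ?_⟩
  calc
    ∑ j, D j * a j ≤ ∑ j, D j * a i :=
      Finset.sum_le_sum fun j hj ↦ mul_le_mul_of_nonneg_left (hmax j hj) (hD0 j)
    _ = a i := by rw [← Finset.sum_mul, hD1, one_mul]

theorem exists_ncard_mul_le_ncard_mem (hD0 : ∀ i, 0 ≤ D i) (hD1 : ∑ i, D i = 1)
    {𝓕 : Set (Finset ι)} {c : R} (hc : ∀ s ∈ 𝓕, c ≤ ∑ i ∈ s, D i) :
    ∃ i, (𝓕.ncard : R) * c ≤ ({s ∈ 𝓕 | i ∈ s}.ncard : R) := by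
  classical
  obtain ⟨F, rfl⟩ := 𝓕.toFinite.exists_finset_coe
  obtain ⟨i, hi⟩ :=
    exists_sum_mul_le_of_sum_eq_one hD0 hD1 fun i ↦ ((F.filter (i ∈ ·)).card : R)
  refine ⟨i, ?_⟩
  calc
    ((F : Set (Finset ι)).ncard : R) * c = F.card • c := by
      rw [Set.ncard_coe_finset, nsmul_eq_mul]
    _ ≤ ∑ s ∈ F, ∑ j ∈ s, D j := Finset.card_nsmul_le_sum F _ c hc
    _ = ∑ j, D j * ((F.filter (j ∈ ·)).card : R) := sum_sum_mem_eq_sum_mul_card_filter_mem F D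
    _ ≤ ((F.filter (i ∈ ·)).card : R) := hi
    _ = ({s ∈ (F : Set (Finset ι)) | i ∈ s}.ncard : R) := by
      rw [← Set.ncard_coe_finset, Finset.coe_filter]
      rfl

end Averaging

/-- If a distribution `D` on `[n]` fractionally hits every `w ∈ W(f, 0^n)` with weight
`≥ 1/k`, then (1) it fractionally hits every monomial of `f` with weight `≥ 1/k`, and
(2) if `mon f` is nonempty, some index belongs to at least a `1/k`-fraction of `mon f`. -/
theorem stmt11 (n : ℕ) (f : Finset (Fin n) → ℝ) (k : ℝ) (hk : 1 ≤ k)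
    (D : Fin n → ℝ) (hD0 : ∀ i, 0 ≤ D i) (hD1 : (∑ i, D i) = 1)
    (hhit : ∀ w ∈ W f (∅ : Finset (Fin n)), 1 / k ≤ ∑ i ∈ w, D i) :
    (∀ s ∈ mon f, 1 / k ≤ ∑ i ∈ s, D i) ∧
    ((mon f).Nonempty →
      ∃ i : Fin n, ((mon f).ncard : ℝ) / k ≤ ({s ∈ mon f | i ∈ s}.ncard : ℝ)) := by
  have weight_mon : ∀ s ∈ mon f, 1 / k ≤ ∑ i ∈ s, D i := fun s hs ↦ by
    obtain ⟨w, hw, hws⟩ := exists_mem_W_empty_subset_of_mem_mon hs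
    exact (hhit w hw).trans (Finset.sum_le_sum_of_subset_of_nonneg hws fun i _ _ ↦ hD0 i)
  refine ⟨weight_mon, fun _ ↦ ?_⟩
  simpa only [mul_one_div] using exists_ncard_mul_le_ncard_mem hD0 hD1 weight_mon
end
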